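/- Let K = cone(v⁽¹⁾,…,v⁽ᵏ⁾) be a polyhedral proper cone in ℝⁿ and f, g ∈ ℝ[z₁,…,zₙ] nonzero. If λf + μg is K-stable or zero for all λ, μ ∈ ℝ, and W_{v⁽ʲ⁾}(f,g) ≤ 0 on ℝⁿ for each generator v⁽ʲ⁾, j = 1,…,k, then g + i·f is K-stable. -/

import Mathlib

open MvPolynomial

def KStable {n : ℕ} (K : Set (Fin n → ℝ)) (f : MvPolynomial (Fin n) ℂ) : Prop :=
  ∀ z : Fin n → ℂ, (fun j => (z j).im) ∈ interior K → MvPolynomial.eval z f ≠ 0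

noncomputable def dirDeriv {n : ℕ} (v : Fin n → ℝ) (h : MvPolynomial (Fin n) ℝ) :
    MvPolynomial (Fin n) ℝ :=
  ∑ j, C (v j) * pderiv j h

noncomputable def wronskian {n : ℕ} (v : Fin n → ℝ) (f g : MvPolynomial (Fin n) ℝ) :
    MvPolynomial (Fin n) ℝ :=
  dirDeriv v f * g - f * dirDeriv v g

/-!
Restricted to a complex line `x + t y` with `y ∈ interior K`, the statement concerns two real
univariate polynomials `F`, `G` whose real pencil consists of stable polynomials and zero. If `F`
and `G` are proportional, then `G + i F` is a nonzero complex multiple of a stable polynomial.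
Otherwise no nontrivial combination of `F` and `G` vanishes at a point of the upper half-plane, so
`Im (G · conj F)` has constant sign there. It vanishes on the real axis, where its derivative in the
direction `i` is `-(F' G - F G')`: this is nonnegative, and positive somewhere because the Wronskian
of independent polynomials is not identically zero. Hence `Im (G · conj F) > 0` on the upper
half-plane, whereas `G = -i F` would make it nonpositive.
-/

open scoped Polynomial ComplexConjugate

/-! ### Polynomials in one variable -/

theorem eq_zero_of_isRoot_of_mul_derivative_eq_mul {R : Type*} [CommRing R] [IsDomain R]
    [CharZero R] {F P Q : R[X]} {s : R} (hF : F.eval s ≠ 0) (hP : P.IsRoot s)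
    (h : F * P.derivative = Q * P) : P = 0 := by
  by_contra hP0
  have hP' : P.derivative ≠ 0 := fun h0 => by
    rw [Polynomial.eq_C_of_derivative_eq_zero h0, Polynomial.IsRoot.def, Polynomial.eval_C] at hP
    exact hP0 (by rw [Polynomial.eq_C_of_derivative_eq_zero h0, hP, Polynomial.C_0])
  have hFP' : F * P.derivative ≠ 0 := mul_ne_zero (by rintro rfl; simp at hF) hP'
  -- At `s` the left side vanishes to order one less than `P`, the right side at least as `P` does.
  have horder := congrArg (Polynomial.rootMultiplicity s) h
  rw [Polynomial.rootMultiplicity_mul hFP', Polynomial.rootMultiplicity_mul (h ▸ hFP'),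
    Polynomial.rootMultiplicity_eq_zero hF, Polynomial.derivative_rootMultiplicity_of_root hP]
    at horder
  have := (Polynomial.rootMultiplicity_pos hP0).2 hP
  lia

theorem wronskian_ne_zero_of_linearIndependent {R : Type*} [CommRing R] [IsDomain R] [CharZero R]
    {F G : R[X]} (hFG : LinearIndependent R ![F, G]) : F.wronskian G ≠ 0 := by
  obtain ⟨s, hs⟩ : ∃ s, F.eval s ≠ 0 := by
    by_contra! h
    exact hFG.ne_zero 0 (Polynomial.funext (by simpa using h))
  intro hW
  set P : R[X] := (-G.eval s) • F + F.eval s • G with hP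
  have hPs : P.IsRoot s := by
    simp only [hP, Polynomial.IsRoot.def, Polynomial.eval_add, Polynomial.eval_smul, smul_eq_mul]
    ring
  have hFP : F * P.derivative = F.derivative * P := by
    simp only [Polynomial.wronskian, hP, Polynomial.derivative_add, Polynomial.smul_eq_C_mul,
      Polynomial.derivative_C_mul] at hW ⊢
    linear_combination Polynomial.C (F.eval s) * hW
  have hP0 : P = 0 := eq_zero_of_isRoot_of_mul_derivative_eq_mul hs hPs hFP
  exact hs (LinearIndependent.pair_iff.1 hFG _ _ hP0).2

theorem im_mul_conj_ne_zero_of_linearIndependent {w z : ℂ} (h : LinearIndependent ℝ ![w, z]) :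
    (z * conj w).im ≠ 0 := by
  intro him
  rw [LinearIndependent.pair_iff] at h
  have hrel : (z * conj w).re • w + (-Complex.normSq w) • z = 0 := by
    have hreal : z * conj w = (z * conj w).re := Complex.ext rfl (by simpa using him)
    simp only [Complex.real_smul, ← hreal, Complex.ofReal_neg, ← Complex.mul_conj]
    ring
  have hw : w = 0 := by simpa using (h _ _ hrel).2
  simpa using (h 1 0 (by simp [hw])).1

theorem add_I_mul_ne_zero_of_im_mul_conj_pos {w z : ℂ} (h : 0 < (z * conj w).im) :
    z + Complex.I * w ≠ 0 := by
  intro hzw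
  rw [eq_neg_of_add_eq_zero_left hzw, neg_mul, mul_assoc, Complex.mul_conj] at h
  simp only [Complex.neg_im, Complex.I_mul_im, Complex.ofReal_re] at h
  linarith [Complex.normSq_nonneg w]

theorem pos_of_isPreconnected_of_ne_zero {X : Type*} [TopologicalSpace X] {s : Set X} {q : X → ℝ}
    (hs : IsPreconnected s) (hq : ContinuousOn q s) (hq0 : ∀ x ∈ s, q x ≠ 0) {a b : X}
    (ha : a ∈ s) (hqa : 0 < q a) (hb : b ∈ s) : 0 < q b := by
  by_contra! hqb
  obtain ⟨x, hx, hqx⟩ := hs.intermediate_value hb ha hq ⟨hqb, hqa.le⟩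
  exact hq0 x hx hqx

theorem aeval_complex_ofReal (P : ℝ[X]) (s : ℝ) : Polynomial.aeval (s : ℂ) P = P.eval s :=
  Polynomial.aeval_algebraMap_apply_eq_algebraMap_eval s P

theorem hasDerivAt_aeval_add_mul_I (P : ℝ[X]) (s : ℝ) :
    HasDerivAt (fun ε : ℝ => Polynomial.aeval (s + ε * Complex.I : ℂ) P)
      (P.derivative.eval s * Complex.I) 0 := by
  have hline : HasDerivAt (fun ε : ℝ => (s + ε * Complex.I : ℂ)) Complex.I 0 := by
    simpa using (Complex.ofRealCLM.hasDerivAt.mul_const Complex.I).const_add (s : ℂ)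
  rw [← aeval_complex_ofReal]
  exact (P.hasDerivAt_aeval (s : ℂ)).comp_of_eq (0 : ℝ) hline (by simp)

theorem hasDerivAt_im_aeval_mul_conj_aeval (F G : ℝ[X]) (s : ℝ) :
    HasDerivAt
      (fun ε : ℝ => (Polynomial.aeval (s + ε * Complex.I : ℂ) G *
        conj (Polynomial.aeval (s + ε * Complex.I : ℂ) F)).im)
      ((F.wronskian G).eval s) 0 := by
  have hprod := (hasDerivAt_aeval_add_mul_I G s).mul (hasDerivAt_aeval_add_mul_I F s).star
  refine (Complex.imCLM.hasFDerivAt.comp_hasDerivAt (0 : ℝ) hprod).congr_deriv ?_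
  simp only [Complex.ofReal_zero, zero_mul, add_zero, aeval_complex_ofReal, RCLike.star_def,
    Complex.conj_ofReal, star_mul', Complex.conj_I, mul_neg, Complex.imCLM_apply, Complex.add_im,
    Complex.mul_im, Complex.mul_re, Complex.ofReal_re, Complex.I_re, mul_zero, Complex.ofReal_im,
    Complex.I_im, mul_one, sub_self, zero_add, Complex.neg_im, Polynomial.wronskian,
    Polynomial.eval_sub, Polynomial.eval_mul]
  ring

theorem exists_im_aeval_mul_conj_aeval_pos {F G : ℝ[X]} {s : ℝ}
    (hs : 0 < (F.wronskian G).eval s) :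
    ∃ t : ℂ, 0 < t.im ∧ 0 < (Polynomial.aeval t G * conj (Polynomial.aeval t F)).im := by
  have hsign := eventually_nhdsWithin_sign_eq_of_deriv_pos
    ((hasDerivAt_im_aeval_mul_conj_aeval F G s).deriv.symm ▸ hs) (by simp [aeval_complex_ofReal])
  obtain ⟨ε, hε, hε0 : 0 < ε⟩ := ((hsign.filter_mono nhdsWithin_le_nhds).and
    (self_mem_nhdsWithin (s := Set.Ioi (0 : ℝ)))).exists
  refine ⟨s + ε * Complex.I, by simpa using hε0, ?_⟩
  rwa [sub_zero, sign_pos hε0, sign_eq_one_iff] at hε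

/-- Stability of a real univariate polynomial: no zero in the open upper half-plane. This is the
notion that `KStable` becomes on the complex lines directed by `interior K`. -/
def IsStable (P : ℝ[X]) : Prop :=
  ∀ t : ℂ, 0 < t.im → Polynomial.aeval t P ≠ 0

theorem IsStable.ne_zero {P : ℝ[X]} (hP : IsStable P) : P ≠ 0 := by
  rintro rfl
  exact hP Complex.I (by simp) (map_zero _)

/-- The real pencil spanned by `F` and `G` consists of stable polynomials and zero: the univariate
form of the assumption on the combinations `λ f + μ g`. -/
def IsStablePencil (F G : ℝ[X]) : Prop :=
  ∀ a b : ℝ, IsStable (a • F + b • G) ∨ a • F + b • G = 0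

namespace IsStablePencil

variable {F G : ℝ[X]} {t : ℂ}

theorem isStable_left (h : IsStablePencil F G) (hF : F ≠ 0) : IsStable F := by
  simpa [hF] using h 1 0

theorem isStable_right (h : IsStablePencil F G) (hG : G ≠ 0) : IsStable G := by
  simpa [hG] using h 0 1

theorem linearIndependent_aeval (h : IsStablePencil F G) (hFG : LinearIndependent ℝ ![F, G])
    (ht : 0 < t.im) : LinearIndependent ℝ ![Polynomial.aeval t F, Polynomial.aeval t G] := by
  rw [LinearIndependent.pair_iff] at hFG ⊢
  intro a b hab
  rcases h a b with hstable | hzero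
  · exact absurd (by simpa using hab) (hstable t ht)
  · exact hFG a b hzero

theorem im_aeval_mul_conj_aeval_pos (h : IsStablePencil F G) (hFG : LinearIndependent ℝ ![F, G])
    (hW : ∀ s : ℝ, 0 ≤ (F.wronskian G).eval s) (ht : 0 < t.im) :
    0 < (Polynomial.aeval t G * conj (Polynomial.aeval t F)).im := by
  obtain ⟨s, hs⟩ : ∃ s, (F.wronskian G).eval s ≠ 0 := by
    by_contra! hW0
    exact wronskian_ne_zero_of_linearIndependent hFG (Polynomial.funext (by simpa using hW0))
  obtain ⟨t₀, ht₀, hpos⟩ := exists_im_aeval_mul_conj_aeval_pos ((hW s).lt_of_ne' hs)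
  have hcont : Continuous fun t : ℂ =>
      (Polynomial.aeval t G * conj (Polynomial.aeval t F)).im :=
    Complex.continuous_im.comp
      (G.continuous_aeval.mul (Complex.continuous_conj.comp F.continuous_aeval))
  exact pos_of_isPreconnected_of_ne_zero (convex_halfSpace_im_gt 0).isPreconnected
    hcont.continuousOn
    (fun _ hu => im_mul_conj_ne_zero_of_linearIndependent (h.linearIndependent_aeval hFG hu))
    ht₀ hpos ht

theorem aeval_add_I_mul_aeval_ne_zero_of_not_linearIndependent (h : IsStablePencil F G)
    (hne : F ≠ 0 ∨ G ≠ 0) (hFG : ¬ LinearIndependent ℝ ![F, G]) (ht : 0 < t.im) :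
    Polynomial.aeval t G + Complex.I * Polynomial.aeval t F ≠ 0 := by
  rw [LinearIndependent.pair_iff] at hFG
  push Not at hFG
  obtain ⟨a, b, hab, hab0⟩ := hFG
  intro hzero
  have hrel : (a : ℂ) * Polynomial.aeval t F + b * Polynomial.aeval t G = 0 := by
    simpa using congrArg (Polynomial.aeval t) hab
  have hprod : (a - b * Complex.I : ℂ) * Polynomial.aeval t F = 0 := by
    linear_combination hrel - b * hzero
  have hcoeff : (a - b * Complex.I : ℂ) ≠ 0 := fun h0 =>
    hab0 (by simpa using congrArg Complex.re h0) (by simpa using congrArg Complex.im h0)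
  have hFt : Polynomial.aeval t F = 0 := (mul_eq_zero.1 hprod).resolve_left hcoeff
  have hGt : Polynomial.aeval t G = 0 := by simpa [hFt] using hzero
  rcases hne with hF | hG
  · exact h.isStable_left hF t ht hFt
  · exact h.isStable_right hG t ht hGt

theorem aeval_add_I_mul_aeval_ne_zero (h : IsStablePencil F G) (hne : F ≠ 0 ∨ G ≠ 0)
    (hW : ∀ s : ℝ, 0 ≤ (F.wronskian G).eval s) (ht : 0 < t.im) :
    Polynomial.aeval t G + Complex.I * Polynomial.aeval t F ≠ 0 := by
  by_cases hFG : LinearIndependent ℝ ![F, G]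
  · exact add_I_mul_ne_zero_of_im_mul_conj_pos (h.im_aeval_mul_conj_aeval_pos hFG hW ht)
  · exact h.aeval_add_I_mul_aeval_ne_zero_of_not_linearIndependent hne hFG ht

end IsStablePencil

/-! ### Restriction to lines -/

theorem derivative_aeval {σ R : Type*} [Fintype σ] [CommSemiring R] (φ : σ → R[X])
    (f : MvPolynomial σ R) :
    Polynomial.derivative (aeval φ f) =
      ∑ j, aeval φ (pderiv j f) * Polynomial.derivative (φ j) := by
  classical
  induction f using MvPolynomial.induction_on with
  | C a => simp
  | add p q hp hq => simp only [map_add, hp, hq, add_mul, Finset.sum_add_distrib]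
  | mul_X p i hp =>
    have hleibniz (j : σ) : aeval φ (pderiv j (p * X i)) * (φ j).derivative =
        aeval φ (pderiv j p) * (φ j).derivative * φ i +
          if j = i then aeval φ p * (φ i).derivative else 0 := by
      rw [pderiv_mul, pderiv_X, map_add, map_mul, map_mul, aeval_X, Pi.single_apply]
      rcases eq_or_ne i j with rfl | hij
      · simp only [if_true, map_one]
        ring
      · simp only [if_neg hij, if_neg hij.symm, map_zero]
        ring
    rw [map_mul, aeval_X, Polynomial.derivative_mul, hp, Finset.sum_mul]
    simp only [hleibniz, Finset.sum_add_distrib, Finset.sum_ite_eq', Finset.mem_univ, if_true]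

section RestrictLine

variable {σ R : Type*} [CommSemiring R] (x y : σ → R)

/-- The restriction `t ↦ f (x + t y)` of a polynomial `f` to the line through `x` with direction
`y`, as a univariate polynomial. -/
noncomputable def restrictLine : MvPolynomial σ R →ₐ[R] R[X] :=
  aeval fun j => Polynomial.C (x j) + Polynomial.C (y j) * Polynomial.X

theorem aeval_restrictLine {A : Type*} [CommSemiring A] [Algebra R A] (f : MvPolynomial σ R)
    (t : A) :
    Polynomial.aeval t (restrictLine x y f) =
      aeval (fun j => algebraMap R A (x j) + algebraMap R A (y j) * t) f := by
  rw [← AlgHom.comp_apply]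
  congr 1
  ext j
  simp [restrictLine]

theorem eval_restrictLine (f : MvPolynomial σ R) (t : R) :
    (restrictLine x y f).eval t = eval (fun j => x j + y j * t) f := by
  simpa [Polynomial.coe_aeval_eq_eval, coe_aeval_eq_eval] using aeval_restrictLine x y f t

end RestrictLine

theorem aeval_restrictLine_complex {σ : Type*} (x y : σ → ℝ) (f : MvPolynomial σ ℝ) (t : ℂ) :
    Polynomial.aeval t (restrictLine x y f) =
      eval (fun j => (x j + y j * t : ℂ)) (f.map (algebraMap ℝ ℂ)) := by
  rw [aeval_restrictLine, eval_map, aeval_def]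
  rfl

theorem derivative_restrictLine {n : ℕ} (x y : Fin n → ℝ) (f : MvPolynomial (Fin n) ℝ) :
    Polynomial.derivative (restrictLine x y f) = restrictLine x y (dirDeriv y f) := by
  rw [restrictLine, derivative_aeval, dirDeriv, map_sum]
  exact Finset.sum_congr rfl fun j _ => by simp [mul_comm (aeval _ _)]

theorem eval_wronskian_restrictLine {n : ℕ} (x y : Fin n → ℝ) (f g : MvPolynomial (Fin n) ℝ)
    (s : ℝ) :
    ((restrictLine x y f).wronskian (restrictLine x y g)).eval s =
      -eval (fun j => x j + y j * s) (wronskian y f g) := by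
  rw [← eval_restrictLine, wronskian, Polynomial.wronskian, derivative_restrictLine,
    derivative_restrictLine, ← map_mul, ← map_mul, ← map_sub, ← Polynomial.eval_neg, ← map_neg,
    neg_sub]

/-! ### Cones -/

theorem smul_mem_interior {G₀ E : Type*} [GroupWithZero G₀] [MulAction G₀ E] [TopologicalSpace E]
    [ContinuousConstSMul G₀ E] {K : Set E} {r : G₀} (hr : r ≠ 0) (hK : ∀ y ∈ K, r • y ∈ K) {y : E}
    (hy : y ∈ interior K) : r • y ∈ interior K :=
  ((isOpenMap_smul₀ hr).mapsTo_interior hK) hy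

section ConicHull

variable {ι E : Type*} [Fintype ι] [AddCommGroup E] [Module ℝ E]

/-- The cone `cone(v⁽¹⁾,…,v⁽ᵏ⁾)` of nonnegative combinations of finitely many vectors, in the form
in which the theorem writes it out. -/
def conicHull (v : ι → E) : Set E :=
  {x | ∃ c : ι → ℝ, (∀ j, 0 ≤ c j) ∧ x = ∑ j, c j • v j}

theorem smul_mem_conicHull {v : ι → E} {r : ℝ} (hr : 0 ≤ r) {y : E} (hy : y ∈ conicHull v) :
    r • y ∈ conicHull v := by
  obtain ⟨c, hc, rfl⟩ := hy
  exact ⟨fun j => r * c j, fun j => mul_nonneg hr (hc j), by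
    simp only [Finset.smul_sum, smul_smul]⟩

end ConicHull

theorem dirDeriv_sum_smul {ι : Type*} [Fintype ι] {n : ℕ} (c : ι → ℝ) (v : ι → Fin n → ℝ)
    (f : MvPolynomial (Fin n) ℝ) :
    dirDeriv (∑ j, c j • v j) f = ∑ j, C (c j) * dirDeriv (v j) f := by
  simp only [dirDeriv, Finset.sum_apply, Pi.smul_apply, smul_eq_mul, map_sum, map_mul,
    Finset.sum_mul, Finset.mul_sum, mul_assoc]
  exact Finset.sum_comm

theorem wronskian_sum_smul {ι : Type*} [Fintype ι] {n : ℕ} (c : ι → ℝ) (v : ι → Fin n → ℝ)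
    (f g : MvPolynomial (Fin n) ℝ) :
    wronskian (∑ j, c j • v j) f g = ∑ j, C (c j) * wronskian (v j) f g := by
  simp only [wronskian, dirDeriv_sum_smul, Finset.sum_mul, Finset.mul_sum,
    ← Finset.sum_sub_distrib]
  exact Finset.sum_congr rfl fun _ _ => by ring

theorem eval_wronskian_nonpos_of_mem_conicHull {ι : Type*} [Fintype ι] {n : ℕ}
    {v : ι → Fin n → ℝ} {f g : MvPolynomial (Fin n) ℝ} {x : Fin n → ℝ}
    (hW : ∀ j, eval x (wronskian (v j) f g) ≤ 0) {y : Fin n → ℝ} (hy : y ∈ conicHull v) :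
    eval x (wronskian y f g) ≤ 0 := by
  obtain ⟨c, hc, rfl⟩ := hy
  simp only [wronskian_sum_smul, map_sum, map_mul, eval_C]
  exact Finset.sum_nonpos fun j _ => mul_nonpos_of_nonneg_of_nonpos (hc j) (hW j)

/-! ### Stability over a cone -/

section Cone

variable {n : ℕ} {K : Set (Fin n → ℝ)} {f g : MvPolynomial (Fin n) ℝ} {y : Fin n → ℝ}

theorem KStable.isStable_restrictLine (hK : ∀ r : ℝ, 0 < r → ∀ y ∈ K, r • y ∈ K)
    (hf : KStable K (f.map (algebraMap ℝ ℂ))) (x : Fin n → ℝ) (hy : y ∈ interior K) :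
    IsStable (restrictLine x y f) := by
  intro t ht
  rw [aeval_restrictLine_complex]
  refine hf _ ?_
  convert smul_mem_interior ht.ne' (hK t.im ht) hy using 2 with j
  simp [mul_comm]

theorem isStablePencil_restrictLine (hK : ∀ r : ℝ, 0 < r → ∀ y ∈ K, r • y ∈ K)
    (hlin : ∀ lam mu : ℝ, KStable K ((lam • f + mu • g).map (algebraMap ℝ ℂ)) ∨
      lam • f + mu • g = 0)
    (x : Fin n → ℝ) (hy : y ∈ interior K) :
    IsStablePencil (restrictLine x y f) (restrictLine x y g) := by
  intro a b
  rw [← map_smul, ← map_smul, ← map_add]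
  exact (hlin a b).imp (fun h => h.isStable_restrictLine hK x hy) (fun h => by rw [h, map_zero])

theorem restrictLine_ne_zero_or_restrictLine_ne_zero
    (hK : ∀ r : ℝ, 0 < r → ∀ y ∈ K, r • y ∈ K) (hne : f ≠ 0 ∨ g ≠ 0)
    (hlin : ∀ lam mu : ℝ, KStable K ((lam • f + mu • g).map (algebraMap ℝ ℂ)) ∨
      lam • f + mu • g = 0)
    (x : Fin n → ℝ) (hy : y ∈ interior K) :
    restrictLine x y f ≠ 0 ∨ restrictLine x y g ≠ 0 := by
  refine hne.imp (fun hf => ?_) (fun hg => ?_)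
  · have hfs : KStable K (f.map (algebraMap ℝ ℂ)) := by simpa [hf] using hlin 1 0
    exact (hfs.isStable_restrictLine hK x hy).ne_zero
  · have hgs : KStable K (g.map (algebraMap ℝ ℂ)) := by simpa [hg] using hlin 0 1
    exact (hgs.isStable_restrictLine hK x hy).ne_zero

end Cone

theorem stmt13_general {n : ℕ} {K : Set (Fin n → ℝ)} {f g : MvPolynomial (Fin n) ℝ}
    (hK : ∀ r : ℝ, 0 < r → ∀ y ∈ K, r • y ∈ K) (hne : f ≠ 0 ∨ g ≠ 0)
    (hlin : ∀ lam mu : ℝ, KStable K ((lam • f + mu • g).map (algebraMap ℝ ℂ)) ∨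
      lam • f + mu • g = 0)
    (hW : ∀ y ∈ interior K, ∀ x : Fin n → ℝ, eval x (wronskian y f g) ≤ 0) :
    KStable K (g.map (algebraMap ℝ ℂ) + C Complex.I * f.map (algebraMap ℝ ℂ)) := by
  intro z hy
  set x : Fin n → ℝ := fun j => (z j).re
  set y : Fin n → ℝ := fun j => (z j).im
  have hz : z = fun j => (x j + y j * Complex.I : ℂ) := funext fun j => (Complex.re_add_im _).symm
  have hWline (s : ℝ) : 0 ≤ ((restrictLine x y f).wronskian (restrictLine x y g)).eval s := by
    rw [eval_wronskian_restrictLine]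
    exact neg_nonneg.2 (hW y hy _)
  have hne_zero := (isStablePencil_restrictLine hK hlin x hy).aeval_add_I_mul_aeval_ne_zero
    (restrictLine_ne_zero_or_restrictLine_ne_zero hK hne hlin x hy) hWline
    (t := Complex.I) (by simp)
  rw [aeval_restrictLine_complex, aeval_restrictLine_complex, ← hz] at hne_zero
  rwa [map_add, map_mul, eval_C]

/-- For a polyhedral proper cone `K = cone(v⁽¹⁾,…,v⁽ᵏ⁾)`: if `λ f + μ g` is `K`-stable or
zero for all real `λ, μ` and `W_{v⁽ʲ⁾}(f,g) ≤ 0` on `ℝⁿ` for each generator, then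
`g + i f` is `K`-stable. -/
theorem stmt13 {n k : ℕ} (v : Fin k → (Fin n → ℝ)) (K : Set (Fin n → ℝ))
    (hKdef : K = {x | ∃ c : Fin k → ℝ, (∀ j, 0 ≤ c j) ∧ x = ∑ j, c j • v j})
    (hKpointed : K ∩ (-K) ⊆ {0}) (hKfull : (interior K).Nonempty)
    (f g : MvPolynomial (Fin n) ℝ) (hf : f ≠ 0) (hg : g ≠ 0)
    (hlin : ∀ lam mu : ℝ, KStable K ((lam • f + mu • g).map (algebraMap ℝ ℂ)) ∨
      lam • f + mu • g = 0)
    (hW : ∀ j : Fin k, ∀ x : Fin n → ℝ, MvPolynomial.eval x (wronskian (v j) f g) ≤ 0) :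
    KStable K (g.map (algebraMap ℝ ℂ) + C Complex.I * f.map (algebraMap ℝ ℂ)) := by
  subst hKdef
  exact stmt13_general (K := conicHull v) (fun _ hr _ hy => smul_mem_conicHull hr.le hy)
    (.inl hf) hlin fun _ hy x =>
      eval_wronskian_nonpos_of_mem_conicHull (fun j => hW j x) (interior_subset hy)
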